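/- Every finitely generated group whose commutator subgroup is finite admits a golden system. In particular, every finitely generated FC-group admits a golden system. -/

import Mathlib

/-!
A finitely generated FC-group has a centre of finite index, hence a finite commutator subgroup by
Schur's theorem; so only the first half needs a golden system to be constructed.

Let `G` be finitely generated with finite commutator subgroup. Composing `G → Gᵃᵇ` with the
projection of `Gᵃᵇ` onto its free part gives a surjection `φ : G → ℤⁿ` with finite kernel `T`
(`exists_hom_finite_ker`). Choose lifts `tᵢ ∈ G` of the standard basis. Every `x ∈ G` is uniquely
`τ * t₁ ^ a₁ * ⋯ * tₙ ^ aₙ` with `τ ∈ T` and `a = φ x`. Colour `x` by `τ` together with the signs of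
the `aᵢ`: this is a colouring with finitely many colours, in which `1` has a colour of its own.

Call left multiplication by `u` *determined* at `x` when the colour of `u * y` is the same for all
`y` of the colour of `x`. Multiplication by an element of `T` is determined everywhere.
Multiplication by `tᵢ` is determined at `x` if `aⱼ = 0` for `j < i` and `0 ≤ aᵢ`, and
multiplication by `tᵢ⁻¹` if `aⱼ = 0` for `j < i` and `aᵢ ≤ 0` (`normalForm_color_mul`). Building
up `x` from the right end of its normal form uses only such steps, so every element is reached from
`1` by determined multiplications with generators and their inverses (`Traceable`).

Finally, a determined step is visible in the configuration set, so it takes place in the same way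
in every group `H` with an equal configuration set; following the steps one by one shows that the
resulting words form a golden system (`hasGoldenSystem_of_traceable`).
-/

open scoped Pointwise

universe u v

/-- `g` is an (ordered, finite) generating tuple of the group `G`. -/
def IsGenerating {G : Type*} [Group G] {n : ℕ} (g : Fin n → G) : Prop :=
  Subgroup.closure (Set.range g) = ⊤

/-- `E` is an (ordered, finite) partition of the underlying set of `G`:
every element lies in exactly one cell. -/
def IsPartition {G : Type*} {m : ℕ} (E : Fin m → Set G) : Prop :=
  ∀ x : G, ∃! i : Fin m, x ∈ E i

/-- The type in which two-sided configurations corresponding to a generating tuple of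
length `n` and a partition of length `m` live: a tuple `(c₀, (c₁,…,cₙ), (c_{n+1},…,c_{2n}))`. -/
abbrev TwoSidedConfig (n m : ℕ) := Fin m × (Fin n → Fin m) × (Fin n → Fin m)

/-- The two-sided configuration set `Con_t(𝔤, ℰ)`. -/
def TwoSidedConfigSet {G : Type*} [Group G] {n m : ℕ} (g : Fin n → G) (E : Fin m → Set G) :
    Set (TwoSidedConfig n m) :=
  {c | ∃ x ∈ E c.1, ∀ i : Fin n, g i * x ∈ E (c.2.1 i) ∧ x * g i ∈ E (c.2.2 i)}

/-- `Con_t(G)`: the collection of all two-sided configuration sets of `G`,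
over all configuration pairs `(𝔤, ℰ)`. -/
def TwoSidedConfigSets (G : Type*) [Group G] : Set (Σ n m : ℕ, Set (TwoSidedConfig n m)) :=
  {S | ∃ g : Fin S.1 → G, ∃ E : Fin S.2.1 → Set G,
    IsGenerating g ∧ IsPartition E ∧ S.2.2 = TwoSidedConfigSet g E}

/-- Two-sided configuration equivalence `G ≈ₜ H`. -/
def ConfigEqT (G : Type*) (H : Type*) [Group G] [Group H] : Prop :=
  TwoSidedConfigSets G = TwoSidedConfigSets H

/-- The (one-sided) configuration set `Con(𝔤, ℰ)`. -/
def ConfigSet {G : Type*} [Group G] {n m : ℕ} (g : Fin n → G) (E : Fin m → Set G) :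
    Set (Fin m × (Fin n → Fin m)) :=
  {c | ∃ x ∈ E c.1, ∀ k : Fin n, g k * x ∈ E (c.2 k)}

/-- `Con(G)`: the collection of all configuration sets of `G`. -/
def ConfigSets (G : Type*) [Group G] : Set (Σ n m : ℕ, Set (Fin m × (Fin n → Fin m))) :=
  {S | ∃ g : Fin S.1 → G, ∃ E : Fin S.2.1 → Set G,
    IsGenerating g ∧ IsPartition E ∧ S.2.2 = ConfigSet g E}

/-- Configuration equivalence `G ≈ H`. -/
def ConfigEq (G : Type*) (H : Type*) [Group G] [Group H] : Prop :=
  ConfigSets G = ConfigSets H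

/-- The word `W(J, ρ; 𝔤) = ∏_{i=1}^{p} g_{J(i)}^{ρ(i)}` associated to a representative
pair `(J, ρ)` (here `ρ i = true` encodes exponent `1`, and `ρ i = false` exponent `-1`). -/
def word {G : Type*} [Group G] {n p : ℕ} (g : Fin n → G) (J : Fin p → Fin n)
    (ρ : Fin p → Bool) : G :=
  ((List.finRange p).map (fun i => if ρ i then g (J i) else (g (J i))⁻¹)).prod

/-- The configuration pair `(𝔤, q⁻¹(ℰ))` is golden w.r.t. the normal subgroup `N`,
where `ℰ` is a partition of `G ⧸ N` containing the singleton `{1}`. -/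
def IsGoldenConfigPair {G : Type u} [Group G] (N : Subgroup G) [N.Normal] {n m : ℕ}
    (g : Fin n → G) (E : Fin m → Set (G ⧸ N)) : Prop :=
  IsGenerating g ∧ IsPartition E ∧
  ∃ i₀ : Fin m, E i₀ = ({1} : Set (G ⧸ N)) ∧
  ∃ (p : G → ℕ) (J : ∀ x : G, Fin (p x) → Fin n) (ρ : ∀ x : G, Fin (p x) → Bool),
    (∀ x : G, x ∉ N →
      QuotientGroup.mk' N x = word (fun i => QuotientGroup.mk' N (g i)) (J x) (ρ x)) ∧
    (∀ (H : Type v) [Group H] (h : Fin n → H) (F : Fin m → Set H),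
      IsGenerating h → IsPartition F →
      TwoSidedConfigSet g (fun i => QuotientGroup.mk' N ⁻¹' E i) = TwoSidedConfigSet h F →
      ∀ x : G, x ∉ N → word h (J x) (ρ x) • F i₀ ∩ F i₀ = ∅)

/-- `G` has a golden configuration pair w.r.t. the normal subgroup `N`. -/
def HasGoldenConfigPairWrt (G : Type u) [Group G] (N : Subgroup G) [N.Normal] : Prop :=
  ∃ (n m : ℕ) (g : Fin n → G) (E : Fin m → Set (G ⧸ N)), IsGoldenConfigPair.{u, v} N g E

/-- `G` has a golden configuration pair (i.e. one w.r.t. the trivial subgroup). -/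
def HasGoldenConfigPair (G : Type u) [Group G] : Prop :=
  HasGoldenConfigPairWrt.{u, v} G ⊥

/-- `(𝔤, ς, {(J_g, ρ_g)})` is a golden system w.r.t. the normal subgroup `N`.  The
finite-range function `ς` on `G ⧸ N` is encoded as a surjection onto `Fin m`; the
`ς`-partition of `G` is then `v ↦ (ς ∘ q)⁻¹(v)`, `v : Fin m`. -/
def IsGoldenSystem {G : Type u} [Group G] (N : Subgroup G) [N.Normal] {n m : ℕ}
    (g : Fin n → G) (ς : G ⧸ N → Fin m)
    {p : G → ℕ} (J : ∀ x : G, Fin (p x) → Fin n) (ρ : ∀ x : G, Fin (p x) → Bool) : Prop :=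
  IsGenerating g ∧ Function.Surjective ς ∧
  (∀ x : G, x ∉ N →
    QuotientGroup.mk' N x = word (fun i => QuotientGroup.mk' N (g i)) (J x) (ρ x)) ∧
  ((fun x : G => ς (QuotientGroup.mk' N x)) ⁻¹' {ς (1 : G ⧸ N)} = (N : Set G)) ∧
  (∀ (H : Type v) [Group H] (h : Fin n → H) (F : Fin m → Set H),
    IsGenerating h → IsPartition F →
    TwoSidedConfigSet g (fun v => (fun x : G => ς (QuotientGroup.mk' N x)) ⁻¹' {v})
      = TwoSidedConfigSet h F →
    ∀ x : G, x ∉ N →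
      word h (J x) (ρ x) • F (ς (1 : G ⧸ N)) ⊆ F (ς (QuotientGroup.mk' N x)))

/-- `G` admits a golden system w.r.t. the normal subgroup `N`. -/
def HasGoldenSystemWrt (G : Type u) [Group G] (N : Subgroup G) [N.Normal] : Prop :=
  ∃ (n m : ℕ) (g : Fin n → G) (ς : G ⧸ N → Fin m) (p : G → ℕ)
    (J : ∀ x : G, Fin (p x) → Fin n) (ρ : ∀ x : G, Fin (p x) → Bool),
    IsGoldenSystem.{u, v} N g ς J ρ

/-- `G` admits a golden system (i.e. one w.r.t. the trivial subgroup). -/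
def HasGoldenSystem (G : Type u) [Group G] : Prop :=
  HasGoldenSystemWrt.{u, v} G ⊥

/-- A group is Hopfian if every surjective endomorphism is an automorphism. -/
def IsHopfianGroup (G : Type*) [Group G] : Prop :=
  ∀ f : G →* G, Function.Surjective f → Function.Bijective f

/-- A group is finitely presented if it is presented by finitely many generators
and finitely many relators. -/
def IsFinitelyPresentedGroup (G : Type*) [Group G] : Prop :=
  ∃ (n : ℕ) (rels : Set (FreeGroup (Fin n))),
    rels.Finite ∧ Nonempty (PresentedGroup rels ≃* G)

/-- A group is polycyclic if it has a subnormal series with cyclic factors. -/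
def IsPolycyclic (G : Type*) [Group G] : Prop :=
  ∃ (k : ℕ) (c : Fin (k + 1) → Subgroup G),
    c 0 = ⊥ ∧ c (Fin.last k) = ⊤ ∧
    ∀ i : Fin k, c i.castSucc ≤ c i.succ ∧
      ∃ hn : ((c i.castSucc).subgroupOf (c i.succ)).Normal,
        letI := hn
        IsCyclic ((c i.succ) ⧸ (c i.castSucc).subgroupOf (c i.succ))

/-- An FC-group: every conjugacy class is finite. -/
def IsFCGroup (G : Type*) [Group G] : Prop :=
  ∀ g : G, {h : G | IsConj g h}.Finite

/-- A normal subset: `hM = Mh` for all `h`. -/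
def IsNormalSubset {H : Type*} [Group H] (M : Set H) : Prop :=
  ∀ h : H, (fun x => h * x) '' M = (fun x => x * h) '' M

/-- `E'` is a refinement of the partition `E`. -/
def IsRefinement {G : Type*} {r s : ℕ} (E' : Fin s → Set G) (E : Fin r → Set G) : Prop :=
  ∀ l : Fin s, ∃ k : Fin r, E' l ⊆ E k

/-- The pairs `(ℰ', ℰ)` and `(ℱ', ℱ)` are similar. -/
def SimilarPairs {G H : Type*} {r s : ℕ} (E : Fin r → Set G) (E' : Fin s → Set G)
    (F : Fin r → Set H) (F' : Fin s → Set H) : Prop :=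
  ∀ k : Fin r, {l : Fin s | (E k ∩ E' l).Nonempty} = {l : Fin s | (F k ∩ F' l).Nonempty}

/-! ### Colourings whose elements can be traced from the identity -/

/-- `Traceable S c x`: the element `x` is obtained from `1` by successive left multiplications by
elements of `S` and their inverses, such that at each step the colour of the current element
already determines the colour of the next one. -/
inductive Traceable {G : Type*} {α : Type*} [Group G] (S : Set G) (c : G → α) : G → Prop
  | one : Traceable S c 1
  | mul {s x : G} : s ∈ S → Traceable S c x → (∀ y, c y = c x → c (s * y) = c (s * x)) →
      Traceable S c (s * x)
  | inv_mul {s x : G} : s ∈ S → Traceable S c x →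
      (∀ y, c y = c x → c (s⁻¹ * y) = c (s⁻¹ * x)) → Traceable S c (s⁻¹ * x)

lemma Traceable.mem_closure {G : Type*} {α : Type*} [Group G] {S : Set G} {c : G → α} {x : G}
    (h : Traceable S c x) : x ∈ Subgroup.closure S := by
  induction h with
  | one => exact one_mem _
  | mul hs _ _ ih => exact mul_mem (Subgroup.subset_closure hs) ih
  | inv_mul hs _ _ ih => exact mul_mem (inv_mem (Subgroup.subset_closure hs)) ih

lemma word_cons {G : Type*} [Group G] {n p : ℕ} (g : Fin n → G) (J : Fin p → Fin n)
    (ρ : Fin p → Bool) (i : Fin n) (b : Bool) :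
    word g (Fin.cons i J : Fin (p + 1) → Fin n) (Fin.cons b ρ : Fin (p + 1) → Bool)
      = (if b then g i else (g i)⁻¹) * word g J ρ := by
  simp [word, List.finRange_succ, List.map_map, Function.comp_def]

lemma exists_mem_twoSidedConfigSet {H : Type*} [Group H] {n m : ℕ} (h : Fin n → H)
    {F : Fin m → Set H} (hF : IsPartition F) (y : H) :
    ∃ d ∈ TwoSidedConfigSet h F, y ∈ F d.1 ∧ ∀ i, h i * y ∈ F (d.2.1 i) := by
  choose k hk _ using hF
  exact ⟨(k y, fun i => k (h i * y), fun i => k (y * h i)),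
    ⟨y, hk _, fun i => ⟨hk _, hk _⟩⟩, hk _, fun i => hk _⟩

/-- A determined multiplication by a generator is carried over to a group with the same
configuration set. -/
lemma smul_mem_of_determined {G H : Type*} [Group G] [Group H] {n m : ℕ} {g : Fin n → G}
    {c : G → Fin m} {h : Fin n → H} {F : Fin m → Set H} (hF : IsPartition F)
    (hC : TwoSidedConfigSet g (fun v => c ⁻¹' {v}) = TwoSidedConfigSet h F) (i : Fin n) {x : G}
    (hx : ∀ y, c y = c x → c (g i * y) = c (g i * x)) {y : H} (hy : y ∈ F (c x)) :
    h i * y ∈ F (c (g i * x)) := by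
  obtain ⟨d, hd, hd1, hd2⟩ := exists_mem_twoSidedConfigSet h hF y
  rw [← hC] at hd
  obtain ⟨z, hz, hz'⟩ := hd
  have h1 : c z = c x := (show c z = d.1 from hz).trans ((hF y).unique hd1 hy)
  have h2 : c (g i * z) = d.2.1 i := (hz' i).1
  rw [← hx z h1, h2]
  exact hd2 i

/-- The same for multiplication by the inverse of a generator: here one looks at the configuration
of the element that is reached. -/
lemma inv_smul_mem_of_determined {G H : Type*} [Group G] [Group H] {n m : ℕ} {g : Fin n → G}
    {c : G → Fin m} {h : Fin n → H} {F : Fin m → Set H} (hF : IsPartition F)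
    (hC : TwoSidedConfigSet g (fun v => c ⁻¹' {v}) = TwoSidedConfigSet h F) (i : Fin n) {x : G}
    (hx : ∀ y, c y = c x → c ((g i)⁻¹ * y) = c ((g i)⁻¹ * x)) {y : H} (hy : y ∈ F (c x)) :
    (h i)⁻¹ * y ∈ F (c ((g i)⁻¹ * x)) := by
  obtain ⟨d, hd, hd1, hd2⟩ := exists_mem_twoSidedConfigSet h hF ((h i)⁻¹ * y)
  rw [← hC] at hd
  obtain ⟨z, hz, hz'⟩ := hd
  have h1 : c z = d.1 := hz
  have h2 : c (g i * z) = d.2.1 i := (hz' i).1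
  have h3 := hd2 i
  rw [mul_inv_cancel_left] at h3
  have h4 := hx _ (h2.trans ((hF y).unique h3 hy))
  rw [inv_mul_cancel_left] at h4
  rw [← h4, h1]
  exact hd1

/-- Along the steps of a traceable element one reads off a representative pair which satisfies
the third condition of a golden system. -/
lemma Traceable.exists_word {G : Type u} [Group G] {n m : ℕ} {g : Fin n → G} {c : G → Fin m}
    {x : G} (hx : Traceable (Set.range g) c x) :
    ∃ (p : ℕ) (J : Fin p → Fin n) (ρ : Fin p → Bool), x = word g J ρ ∧
      ∀ (H : Type v) [Group H] (h : Fin n → H) (F : Fin m → Set H), IsPartition F →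
        TwoSidedConfigSet g (fun v => c ⁻¹' {v}) = TwoSidedConfigSet h F →
        word h J ρ • F (c 1) ⊆ F (c x) := by
  induction hx with
  | one =>
    refine ⟨0, Fin.elim0, Fin.elim0, by simp [word], fun H _ h F _ _ => ?_⟩
    simp [word]
  | @mul s x hs _ hdet ih =>
    obtain ⟨i, rfl⟩ := hs
    obtain ⟨p, J, ρ, hw, hH⟩ := ih
    refine ⟨p + 1, Fin.cons i J, Fin.cons true ρ, ?_, fun H _ h F hF hC => ?_⟩
    · rw [word_cons, ← hw]; simp
    · rw [word_cons, mul_smul]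
      rintro _ ⟨y, hy, rfl⟩
      simpa using smul_mem_of_determined hF hC i hdet (hH H h F hF hC hy)
  | @inv_mul s x hs _ hdet ih =>
    obtain ⟨i, rfl⟩ := hs
    obtain ⟨p, J, ρ, hw, hH⟩ := ih
    refine ⟨p + 1, Fin.cons i J, Fin.cons false ρ, ?_, fun H _ h F hF hC => ?_⟩
    · rw [word_cons, ← hw]; simp
    · rw [word_cons, mul_smul]
      rintro _ ⟨y, hy, rfl⟩
      simpa using inv_smul_mem_of_determined hF hC i hdet (hH H h F hF hC hy)

lemma Traceable.comp {G : Type*} {α β : Type*} [Group G] {S : Set G} {c : G → α} {d : G → β}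
    (hcd : ∀ x y, c x = c y ↔ d x = d y) {x : G} (h : Traceable S c x) : Traceable S d x := by
  induction h with
  | one => exact .one
  | mul hs _ hdet ih => exact .mul hs ih fun y hy => (hcd _ _).1 (hdet y ((hcd _ _).2 hy))
  | inv_mul hs _ hdet ih => exact .inv_mul hs ih fun y hy => (hcd _ _).1 (hdet y ((hcd _ _).2 hy))

/-- A colouring with finitely many colours that isolates `1` and for which all elements are
traceable gives rise to a golden system. -/
lemma hasGoldenSystem_of_traceable {G : Type u} [Group G] {α : Type*} {S : Set G} (hS : S.Finite)
    (c : G → α) (hc : (Set.range c).Finite) (h1 : ∀ x, c x = c 1 → x = 1)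
    (hT : ∀ x, Traceable S c x) : HasGoldenSystem.{u, v} G := by
  have : Finite S := hS
  have : Finite (Set.range c) := hc
  obtain ⟨n, ⟨e⟩⟩ := Finite.exists_equiv_fin S
  obtain ⟨m, ⟨k⟩⟩ := Finite.exists_equiv_fin (Set.range c)
  set g : Fin n → G := fun i => e.symm i with hg
  have hgS : Set.range g = S := by
    rw [hg, ← Function.comp_def, Set.range_comp, e.symm.surjective.range_eq, Set.image_univ,
      Subtype.range_coe]
  set d : G → Fin m := fun x => k (Set.rangeFactorization c x) with hd
  have hcd : ∀ x y, c x = c y ↔ d x = d y := fun x y => by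
    simp [hd, Set.rangeFactorization]
  have hTd : ∀ x, Traceable (Set.range g) d x := fun x => hgS ▸ (hT x).comp hcd
  choose p J ρ hw hH using fun x => (hTd x).exists_word.{u, v}
  -- The colouring has to be a function on `G ⧸ ⊥`.
  have hq : (fun x : G => d (QuotientGroup.quotientBot (QuotientGroup.mk' (⊥ : Subgroup G) x)))
      = d := rfl
  refine ⟨n, m, g, fun q => d (QuotientGroup.quotientBot q), p, J, ρ, ?_, ?_, ?_, ?_, ?_⟩
  · exact eq_top_iff.2 fun x _ => (hTd x).mem_closure
  · exact (k.surjective.comp Set.rangeFactorization_surjective).comp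
      QuotientGroup.quotientBot.surjective
  · intro x _
    conv_lhs => rw [hw x]
    simp [word, map_list_prod, List.map_map, Function.comp_def, apply_ite]
  · rw [hq]
    ext x
    simp only [map_one, Set.mem_preimage, Set.mem_singleton_iff, SetLike.mem_coe,
      Subgroup.mem_bot]
    exact ⟨fun h => h1 x ((hcd _ _).2 h), fun h => by rw [h]⟩
  · intro H _ h F _ hF hC x _
    exact hH x H h F hF hC

/-! ### Normal forms over a free abelian quotient -/

/-- The ordered product `t₁ ^ a₁ * ⋯ * tₙ ^ aₙ`. -/
def orderedPow {G : Type*} [Group G] {n : ℕ} (t : Fin n → G) (a : Fin n → ℤ) : G :=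
  (List.ofFn fun i => t i ^ a i).prod

lemma orderedPow_add_single {G : Type*} [Group G] {n : ℕ} (t : Fin n → G) (a : Fin n → ℤ)
    (i : Fin n) (ha : ∀ j < i, a j = 0) (ε : ℤ) :
    orderedPow t (a + Pi.single i ε) = t i ^ ε * orderedPow t a := by
  induction n with
  | zero => exact i.elim0
  | succ n ih =>
    have hsucc (b : Fin (n + 1) → ℤ) :
        orderedPow t b = t 0 ^ b 0 * orderedPow (fun j => t j.succ) fun j => b j.succ := by
      simp [orderedPow, List.ofFn_succ]
    rw [hsucc, hsucc a]
    cases i using Fin.cases with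
    | zero =>
      have : (fun j : Fin n => (a + Pi.single 0 ε : Fin (n + 1) → ℤ) j.succ)
          = fun j => a j.succ := by
        ext j; simp
      rw [this, ← mul_assoc, ← zpow_add]
      simp [add_comm]
    | succ i =>
      have h0 : a 0 = 0 := ha 0 (Fin.succ_pos i)
      have : (fun j : Fin n => (a + Pi.single i.succ ε : Fin (n + 1) → ℤ) j.succ)
          = (fun j => a j.succ) + Pi.single i ε := by
        ext j; simp [Pi.single_apply]
      rw [this, ih _ _ i fun j hj => ha _ (Fin.succ_lt_succ_iff.2 hj)]
      simp [h0]

lemma orderedPow_zero {G : Type*} [Group G] {n : ℕ} (t : Fin n → G) : orderedPow t 0 = 1 := by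
  simp [orderedPow]

lemma map_orderedPow {G : Type*} [Group G] {n : ℕ} (φ : G →* Multiplicative (Fin n → ℤ))
    {t : Fin n → G} (ht : ∀ i, φ (t i) = Multiplicative.ofAdd (Pi.single i 1)) (a : Fin n → ℤ) :
    φ (orderedPow t a) = Multiplicative.ofAdd a := by
  simp only [orderedPow, map_list_prod, List.map_ofFn, Function.comp_def, List.prod_ofFn, map_zpow,
    ht, ← ofAdd_zsmul, ← ofAdd_sum]
  congr 1
  ext j
  simp [Finset.sum_apply, Pi.single_apply]

/-- The colour of `x = τ * t₁ ^ a₁ * ⋯ * tₙ ^ aₙ`, where `a = φ x`: the element `τ` and the signs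
of the `aᵢ`. -/
noncomputable def normalFormColor {G : Type*} [Group G] {n : ℕ} (φ : G →* Multiplicative (Fin n → ℤ))
    (t : Fin n → G) (x : G) : G × (Fin n → SignType) :=
  (x * (orderedPow t (φ x).toAdd)⁻¹, fun i => SignType.sign ((φ x).toAdd i))

/-- The effect of left multiplication by `tᵢ ^ ε` on the colour of an element all of whose
exponents before the `i`-th one vanish. -/
lemma normalForm_color_mul {G : Type*} [Group G] {n : ℕ} (φ : G →* Multiplicative (Fin n → ℤ))
    {t : Fin n → G} (ht : ∀ i, φ (t i) = Multiplicative.ofAdd (Pi.single i 1)) (i : Fin n) (ε : ℤ)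
    {x : G} (hx : ∀ j < i, (φ x).toAdd j = 0) :
    normalFormColor φ t (t i ^ ε * x)
      = (t i ^ ε * (normalFormColor φ t x).1 * (t i ^ ε)⁻¹,
        Function.update (normalFormColor φ t x).2 i (SignType.sign ((φ x).toAdd i + ε))) := by
  have h1 : (φ (t i ^ ε * x)).toAdd = (φ x).toAdd + Pi.single i ε := by
    ext j
    simp [ht, toAdd_zpow, Pi.single_apply, add_comm]
  simp only [normalFormColor, h1, orderedPow_add_single t _ i hx]
  refine Prod.ext (by group) ?_
  ext j
  rcases eq_or_ne j i with rfl | hj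
  · simp
  · simp [hj]

/-- If the colour of `x` determines the sign of the `i`-th exponent after adding `ε` to it, then
multiplication by `tᵢ ^ ε` is determined at `x`. -/
lemma determined_zpow {G : Type*} [Group G] {n : ℕ} (φ : G →* Multiplicative (Fin n → ℤ))
    {t : Fin n → G} (ht : ∀ i, φ (t i) = Multiplicative.ofAdd (Pi.single i 1)) (i : Fin n) (ε : ℤ)
    {x : G} (hx : ∀ j < i, (φ x).toAdd j = 0)
    (hε : ∀ b : ℤ, SignType.sign b = SignType.sign ((φ x).toAdd i) →
      SignType.sign (b + ε) = SignType.sign ((φ x).toAdd i + ε))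
    (y : G) (hy : normalFormColor φ t y = normalFormColor φ t x) :
    normalFormColor φ t (t i ^ ε * y) = normalFormColor φ t (t i ^ ε * x) := by
  have hs (j) : SignType.sign ((φ y).toAdd j) = SignType.sign ((φ x).toAdd j) :=
    congrFun (congrArg Prod.snd hy) j
  have hy0 : ∀ j < i, (φ y).toAdd j = 0 := fun j hj => by
    rw [← sign_eq_zero_iff, hs j, hx j hj, sign_zero]
  rw [normalForm_color_mul φ ht i ε hy0, normalForm_color_mul φ ht i ε hx, hy, hε _ (hs i)]

lemma traceable_orderedPow {G : Type*} [Group G] {n : ℕ} (φ : G →* Multiplicative (Fin n → ℤ))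
    {t : Fin n → G} (ht : ∀ i, φ (t i) = Multiplicative.ofAdd (Pi.single i 1)) {S : Set G}
    (hS : ∀ i, t i ∈ S) (a : Fin n → ℤ) : Traceable S (normalFormColor φ t) (orderedPow t a) := by
  -- Induction on `∑ |aᵢ|`, lowering the absolute value of the first nonzero exponent by one.
  induction hN : ∑ i, (a i).natAbs using Nat.strong_induction_on generalizing a with
  | _ N ih =>
  subst hN
  by_cases h0 : a = 0
  · rw [h0, orderedPow_zero]; exact .one
  · obtain ⟨i, hi, hmin⟩ : ∃ i, a i ≠ 0 ∧ ∀ j < i, a j = 0 := by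
      obtain ⟨i, hi⟩ := Function.ne_iff.1 h0
      obtain ⟨i, hi, hm⟩ := WellFounded.has_min (wellFounded_lt (α := Fin n)) {i | a i ≠ 0} ⟨i, hi⟩
      exact ⟨i, hi, fun j hj => by_contra fun h => hm j h hj⟩
    have key : ∀ ε : ℤ, (a i - ε).natAbs < (a i).natAbs →
        Traceable S (normalFormColor φ t) (orderedPow t (a - Pi.single i ε)) ∧
        (φ (orderedPow t (a - Pi.single i ε))).toAdd i = a i - ε ∧
        (∀ j < i, (φ (orderedPow t (a - Pi.single i ε))).toAdd j = 0) ∧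
        orderedPow t a = t i ^ ε * orderedPow t (a - Pi.single i ε) := by
      intro ε hlt
      have hz : ∀ j < i, (a - Pi.single i ε : Fin n → ℤ) j = 0 := fun j hj => by
        simp [hmin j hj, hj.ne]
      refine ⟨ih _ ?_ _ rfl, by simp [map_orderedPow φ ht], by simpa [map_orderedPow φ ht] using hz,
        ?_⟩
      · refine Finset.sum_lt_sum (fun j _ => ?_) ⟨i, Finset.mem_univ i, by simpa using hlt⟩
        rcases eq_or_ne j i with rfl | hj
        · simpa using hlt.le
        · simp [hj]
      · rw [← orderedPow_add_single t _ i hz, sub_add_cancel]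
    rcases lt_or_gt_of_ne hi with hneg | hpos
    · obtain ⟨hT, hφ, hz, heq⟩ := key (-1) (by omega)
      rw [heq]
      have hdet := determined_zpow φ ht i (-1) hz fun b hb => by
        have hb' : b ≤ 0 := by
          rw [← sign_nonpos_iff, hb, sign_nonpos_iff, hφ]; omega
        rw [hφ, sign_neg (by omega), sign_neg (by omega)]
      rw [zpow_neg_one] at hdet ⊢
      exact .inv_mul (hS i) hT hdet
    · obtain ⟨hT, hφ, hz, heq⟩ := key 1 (by omega)
      rw [heq]
      have hdet := determined_zpow φ ht i 1 hz fun b hb => by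
        have hb' : 0 ≤ b := by
          rw [← sign_nonneg_iff, hb, sign_nonneg_iff, hφ]; omega
        rw [hφ, sign_pos (by omega), sign_pos (by omega)]
      rw [zpow_one] at hdet ⊢
      exact .mul (hS i) hT hdet

/-- Groups that are finite-by-(free abelian of finite rank) admit a golden system. -/
lemma hasGoldenSystem_of_hom {G : Type u} [Group G] {n : ℕ} (φ : G →* Multiplicative (Fin n → ℤ))
    (hφ : Function.Surjective φ) (hker : (φ.ker : Set G).Finite) : HasGoldenSystem.{u, v} G := by
  choose t ht using fun i : Fin n => hφ (Multiplicative.ofAdd (Pi.single i 1))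
  have hmem (x : G) : (normalFormColor φ t x).1 ∈ (φ.ker : Set G) := by
    simp [normalFormColor, MonoidHom.mem_ker, map_orderedPow φ ht]
  refine hasGoldenSystem_of_traceable (S := Set.range t ∪ φ.ker) ((Set.finite_range t).union hker)
    (normalFormColor φ t) ?_ ?_ ?_
  · exact (hker.prod Set.finite_univ).subset
      (by rintro _ ⟨x, rfl⟩; exact ⟨hmem x, Set.mem_univ _⟩)
  · intro x hx
    have h0 : (φ x).toAdd = 0 := by
      ext i
      have := congrFun (congrArg Prod.snd hx) i
      simpa [normalFormColor] using this
    have := congrArg Prod.fst hx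
    simpa [normalFormColor, h0, orderedPow_zero] using this
  · intro x
    have hx : x = (normalFormColor φ t x).1 * orderedPow t (φ x).toAdd := by
      simp [normalFormColor]
    have hT : ∀ τ ∈ φ.ker, ∀ y, normalFormColor φ t (τ * y)
        = (τ * (normalFormColor φ t y).1, (normalFormColor φ t y).2) := fun τ hτ y => by
      simp [normalFormColor, MonoidHom.mem_ker.1 hτ, mul_assoc]
    rw [hx]
    refine .mul (Or.inr (hmem x)) (traceable_orderedPow φ ht (fun i => Or.inl ⟨i, rfl⟩) _) ?_
    intro y hy
    rw [hT _ (hmem x), hT _ (hmem x), hy]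

/-! ### Groups with finite commutator subgroup -/

lemma finite_preimage_of_finite_ker {G A : Type*} [Group G] [Group A] (f : G →* A)
    (hf : (f.ker : Set G).Finite) {s : Set A} (hs : s.Finite) : (f ⁻¹' s).Finite := by
  refine hs.preimage' fun b _ => ?_
  by_cases hb : ∃ x, f x = b
  · obtain ⟨x, rfl⟩ := hb
    refine (hf.image fun k => x * k).subset fun y hy => ⟨x⁻¹ * y, ?_, by simp⟩
    have hy : f y = f x := hy
    simp [MonoidHom.mem_ker, hy]
  · convert Set.finite_empty
    ext y
    exact ⟨fun hy => hb ⟨y, hy⟩, fun h => h.elim⟩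

lemma exists_hom_finite_ker (G : Type*) [Group G] (hG : Group.FG G)
    (hfin : Finite (commutator G)) :
    ∃ (n : ℕ) (φ : G →* Multiplicative (Fin n → ℤ)),
      Function.Surjective φ ∧ (φ.ker : Set G).Finite := by
  have : Group.FG (Abelianization G) := QuotientGroup.fg _
  obtain ⟨n, ι, _, p, hp, e, ⟨ψ⟩⟩ :=
    AddCommGroup.equiv_free_prod_directSum_zmod (Additive (Abelianization G))
  have hne (i : ι) : NeZero (p i ^ e i) := ⟨pow_ne_zero _ (hp i).ne_zero⟩
  have : Finite (DirectSum ι fun i => ZMod (p i ^ e i)) := by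
    classical
    exact Finite.of_equiv _ (DirectSum.addEquivProd fun i => ZMod (p i ^ e i)).symm.toEquiv
  let θ : Additive (Abelianization G) →+ (Fin n → ℤ) :=
    (Finsupp.linearEquivFunOnFinite ℤ ℤ (Fin n)).toAddEquiv.toAddMonoidHom.comp
      ((AddMonoidHom.fst _ _).comp ψ.toAddMonoidHom)
  refine ⟨n, (AddMonoidHom.toMultiplicativeRight θ).comp Abelianization.of, ?_, ?_⟩
  · intro a
    obtain ⟨x, hx⟩ : ∃ x, θ x = a.toAdd :=
      ⟨ψ.symm ((Finsupp.linearEquivFunOnFinite ℤ ℤ (Fin n)).symm a.toAdd, 0), by simp [θ]⟩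
    obtain ⟨y, hy⟩ := QuotientGroup.mk'_surjective (commutator G) x.toMul
    refine ⟨y, ?_⟩
    rw [MonoidHom.comp_apply, show Abelianization.of y = x.toMul from hy]
    exact congrArg Multiplicative.ofAdd hx
  · have hker : ((Abelianization.of (G := G)).ker : Set G).Finite := by
      rw [Abelianization.ker_of]
      exact Set.toFinite _
    have hθ : {a : Abelianization G | θ (Additive.ofMul a) = 0}.Finite := by
      have := (Set.finite_univ (α := DirectSum ι fun i => ZMod (p i ^ e i)))
      refine Set.Finite.of_finite_image (f := fun a => ψ (Additive.ofMul a))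
        (((Set.finite_singleton 0).prod this).subset ?_) fun a _ b _ h => ψ.injective h
      rintro _ ⟨a, ha, rfl⟩
      refine ⟨?_, Set.mem_univ _⟩
      simpa [θ] using ha
    exact (finite_preimage_of_finite_ker Abelianization.of hker hθ).subset fun x hx =>
      congrArg Multiplicative.toAdd (MonoidHom.mem_ker.1 hx)

/-! ### FC-groups -/

open scoped commutatorElement in
/-- In a finitely generated FC-group the centre has finite index, because an element is determined
modulo the centre by the conjugates of the generators by it. Hence there are only finitely many
commutators, and Schur's theorem applies. -/
lemma finite_commutator_of_FC (K : Type*) [Group K] (hK : Group.FG K) (hFC : IsFCGroup K) :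
    Finite (commutator K) := by
  obtain ⟨S, hS⟩ := Group.fg_def.1 hK
  have hfin : (Set.range fun (k : K) (s : S) => k * s * k⁻¹).Finite := by
    refine (Set.Finite.pi' fun s : S => hFC s).subset ?_
    rintro _ ⟨k, rfl⟩ s
    exact isConj_iff.2 ⟨k, rfl⟩
  have : Finite (K ⧸ Subgroup.center K) := by
    have := hfin.to_subtype
    let f : K ⧸ Subgroup.center K → Set.range fun (k : K) (s : S) => k * s * k⁻¹ :=
      fun q => ⟨_, q.out, rfl⟩
    refine Finite.of_injective f fun a b hab => ?_
    apply (Subgroup.quotientCenterEmbedding hS).injective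
    rw [← a.out_eq', ← b.out_eq']
    funext s
    have h := congrFun (congrArg Subtype.val hab) s
    erw [Subgroup.quotientCenterEmbedding_apply hS, Subgroup.quotientCenterEmbedding_apply hS]
    apply Subtype.ext
    exact congrArg (· * (s : K)⁻¹) h
  have : Finite (commutatorSet K) := by
    refine ((Set.finite_range fun q : (K ⧸ Subgroup.center K) × (K ⧸ Subgroup.center K) =>
      ⁅q.1.out, q.2.out⁆)).subset ?_
    rintro _ ⟨a, b, rfl⟩
    refine ⟨(a, b), ?_⟩
    obtain ⟨z, hz⟩ := QuotientGroup.mk_out_eq_mul (Subgroup.center K) a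
    obtain ⟨w, hw⟩ := QuotientGroup.mk_out_eq_mul (Subgroup.center K) b
    have hzc := fun k => Subgroup.mem_center_iff.1 z.2 k
    have hwc := fun k => Subgroup.mem_center_iff.1 w.2 k
    simp only [hz, hw, commutatorElement_def, mul_inv_rev]
    calc a * z * (b * w) * ((z : K)⁻¹ * a⁻¹) * ((w : K)⁻¹ * b⁻¹)
        = a * (z * (b * w)) * (z : K)⁻¹ * a⁻¹ * (w : K)⁻¹ * b⁻¹ := by group
      _ = a * (b * (w * a⁻¹)) * (w : K)⁻¹ * b⁻¹ := by rw [← hzc]; group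
      _ = a * b * a⁻¹ * b⁻¹ := by rw [← hwc]; group
  infer_instance

/-- every finitely generated group with finite commutator subgroup admits a
golden system; in particular every finitely generated FC-group admits a golden system. -/
theorem hasGoldenSystem_of_finite_commutator_and_of_FC :
    (∀ (G : Type u) [Group G], Group.FG G → Finite (commutator G) →
      HasGoldenSystem.{u, v} G) ∧
    (∀ (K : Type u) [Group K], Group.FG K → IsFCGroup K → HasGoldenSystem.{u, v} K) := by
  have main : ∀ (G : Type u) [Group G], Group.FG G → Finite (commutator G) →
      HasGoldenSystem.{u, v} G := fun G _ hG hfin => by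
    obtain ⟨n, φ, hφ, hker⟩ := exists_hom_finite_ker G hG hfin
    exact hasGoldenSystem_of_hom φ hφ hker
  exact ⟨main, fun K _ hK hFC => main K hK (finite_commutator_of_FC K hK hFC)⟩
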